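/- (Pathwise matching of reflected local times, equation (2.54).) Let z₊, z₋ : [0,∞) → ℝ be continuous with z₊(0) = z₋(0) = 0, and let z : [0,∞) → ℝ be a continuous function satisfying z(θ) = z₊(P₊^z(θ)) − z₋(P₋^z(θ)) for all θ ≥ 0, where P₊^z(θ) := ∫₀^θ 1{z(τ) > 0} dτ and P₋^z(θ) := ∫₀^θ 1{z(τ) < 0} dτ. Then Γ(z₊)(P₊^z(θ)) = Γ(z₋)(P₋^z(θ)) for all θ ≥ 0. -/

import Mathlib

open Set Filter MeasureTheory

/-- The Skorohod map: `Γ(w)(θ) = max(0, sup_{0 ≤ ν ≤ θ} (−w(ν)))`. -/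
noncomputable def skorohod (w : ℝ → ℝ) (θ : ℝ) : ℝ :=
  max 0 (sSup ((fun ν => -w ν) '' Set.Icc 0 θ))

/-- Occupation time of the positive half-line: `P₊^z(θ) = ∫₀^θ 1{z(τ) > 0} dτ`. -/
noncomputable def occPos (f : ℝ → ℝ) (t : ℝ) : ℝ :=
  ∫ s in (0:ℝ)..t, Set.indicator {u : ℝ | 0 < f u} (fun _ => (1:ℝ)) s

/-- Occupation time of the negative half-line: `P₋^z(θ) = ∫₀^θ 1{z(τ) < 0} dτ`. -/
noncomputable def occNeg (f : ℝ → ℝ) (t : ℝ) : ℝ :=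
  ∫ s in (0:ℝ)..t, Set.indicator {u : ℝ | f u < 0} (fun _ => (1:ℝ)) s

theorem aux_occ (w : ℝ → ℝ) (hw : Continuous w) :
    Continuous (occPos w) ∧ Monotone (occPos w) ∧ occPos w 0 = 0 ∧
    ∀ r s, r ≤ s → (∀ u ∈ Set.Ioc r s, w u ≤ 0) → occPos w s = occPos w r := by
  have hm : MeasurableSet {u : ℝ | 0 < w u} := (isOpen_lt continuous_const hw).measurableSet
  have hi : ∀ a b : ℝ, IntervalIntegrable
      (Set.indicator {u : ℝ | 0 < w u} (fun _ => (1:ℝ))) volume a b := fun a b =>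
    ⟨(intervalIntegrable_const (c := (1:ℝ)) (a := a) (b := b)).1.indicator hm,
     (intervalIntegrable_const (c := (1:ℝ)) (a := a) (b := b)).2.indicator hm⟩
  have hsub : ∀ r s, occPos w s - occPos w r =
      ∫ u in r..s, Set.indicator {u : ℝ | 0 < w u} (fun _ => (1:ℝ)) u := fun r s =>
    intervalIntegral.integral_interval_sub_left (hi 0 s) (hi 0 r)
  refine ⟨intervalIntegral.continuous_primitive hi 0, ?_, ?_, ?_⟩
  · intro r s hrs
    have h0 : 0 ≤ ∫ u in r..s, Set.indicator {u : ℝ | 0 < w u} (fun _ => (1:ℝ)) u :=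
      intervalIntegral.integral_nonneg hrs
        (fun u _ => Set.indicator_nonneg (fun _ _ => zero_le_one) u)
    linarith [hsub r s]
  · simp [occPos]
  · intro r s hrs h
    have h0 : ∫ u in r..s, Set.indicator {u : ℝ | 0 < w u} (fun _ => (1:ℝ)) u = 0 := by
      rw [intervalIntegral.integral_of_le hrs]
      apply setIntegral_eq_zero_of_forall_eq_zero
      intro u hu
      exact Set.indicator_of_notMem (by simpa using h u hu) _
    linarith [hsub r s]

theorem occNeg_eq (w : ℝ → ℝ) : occNeg w = occPos (fun u => - w u) := by
  funext t
  simp [occNeg, occPos]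

theorem aux_le (zp zm z : ℝ → ℝ) (hzm : ContinuousOn zm (Set.Ici 0))
    (hz : Continuous z) (hz0 : z 0 = 0)
    (hrep : ∀ θ ∈ Set.Ici (0:ℝ), z θ = zp (occPos z θ) - zm (occNeg z θ))
    (θ : ℝ) (hθ : 0 ≤ θ) : skorohod zp (occPos z θ) ≤ skorohod zm (occNeg z θ) := by
  obtain ⟨hAc, hAm, hA0, hAk⟩ := aux_occ z hz
  obtain ⟨-, hBm, hB0, -⟩ := aux_occ (fun u => - z u) hz.neg
  rw [← occNeg_eq] at hBm hB0
  have hAθ : 0 ≤ occPos z θ := hA0 ▸ hAm hθ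
  refine max_le (le_max_left _ _) ?_
  apply csSup_le ((Set.nonempty_Icc.2 hAθ).image _)
  rintro _ ⟨ν, hν, rfl⟩
  obtain ⟨s, hs, rfl⟩ : ν ∈ occPos z '' Set.Icc 0 θ :=
    intermediate_value_Icc hθ hAc.continuousOn (by rwa [hA0])
  obtain ⟨r, ⟨⟨hr0, hrs⟩, hzr⟩, hr⟩ : ∃ r, IsGreatest (Set.Icc 0 s ∩ {u | 0 ≤ z u}) r :=
    (isCompact_Icc.inter_right (isClosed_le continuous_const hz)).exists_isGreatest
      ⟨0, ⟨le_rfl, hs.1⟩, hz0.ge⟩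
  have hAr : occPos z s = occPos z r := by
    apply hAk r s hrs
    intro u hu
    by_contra! hlt
    exact absurd (hr ⟨⟨hr0.trans hu.1.le, hu.2⟩, hlt.le⟩) (not_le.2 hu.1)
  have hbdd : BddAbove ((fun ν => -zm ν) '' Set.Icc 0 (occNeg z θ)) :=
    (isCompact_Icc.image_of_continuousOn (hzm.neg.mono Set.Icc_subset_Ici_self)).bddAbove
  have h1 : -zm (occNeg z r) ≤ sSup ((fun ν => -zm ν) '' Set.Icc 0 (occNeg z θ)) :=
    le_csSup hbdd ⟨_, ⟨hB0 ▸ hBm hr0, hBm (hrs.trans hs.2)⟩, rfl⟩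
  have h2 := hrep r hr0
  have h3 : 0 ≤ z r := hzr
  refine le_trans ?_ (h1.trans (le_max_right _ _))
  show -zp (occPos z s) ≤ _
  rw [hAr]
  linarith

theorem occPos_congr (f g : ℝ → ℝ) (h : ∀ u, 0 ≤ u → f u = g u) (t : ℝ) (ht : 0 ≤ t) :
    occPos f t = occPos g t := by
  apply intervalIntegral.integral_congr
  intro u hu
  rw [Set.uIcc_of_le ht] at hu
  simp [Set.indicator, h u hu.1]

/-- Pathwise matching of reflected local times (equation (2.54)): if a continuous path
`z` satisfies `z(θ) = z₊(P₊^z(θ)) − z₋(P₋^z(θ))` for all `θ ≥ 0`, then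
`Γ(z₊)(P₊^z(θ)) = Γ(z₋)(P₋^z(θ))` for all `θ ≥ 0`. -/
theorem matching_reflected_local_times
    (zp zm z : ℝ → ℝ)
    (hzp : ContinuousOn zp (Set.Ici 0)) (hzm : ContinuousOn zm (Set.Ici 0))
    (hz : ContinuousOn z (Set.Ici 0))
    (hzp0 : zp 0 = 0) (hzm0 : zm 0 = 0)
    (hrep : ∀ θ ∈ Set.Ici (0:ℝ), z θ = zp (occPos z θ) - zm (occNeg z θ)) :
    ∀ θ ∈ Set.Ici (0:ℝ), skorohod zp (occPos z θ) = skorohod zm (occNeg z θ) := by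
  set w : ℝ → ℝ := fun u => z (max u 0) with hw
  have hwz : ∀ u, 0 ≤ u → z u = w u := fun u hu => by simp [hw, hu]
  have hwc : Continuous w :=
    hz.comp_continuous (continuous_id.max continuous_const) (fun u => Set.mem_Ici.2 (le_max_right _ _))
  have hP : ∀ t, 0 ≤ t → occPos z t = occPos w t := occPos_congr z w hwz
  have hN : ∀ t, 0 ≤ t → occNeg z t = occNeg w t := by
    rw [occNeg_eq, occNeg_eq]
    exact occPos_congr _ _ (fun u hu => by rw [hwz u hu])
  have hrw : ∀ θ ∈ Set.Ici (0:ℝ), w θ = zp (occPos w θ) - zm (occNeg w θ) := by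
    intro θ hθ
    rw [← hP θ hθ, ← hN θ hθ, ← hwz θ hθ]
    exact hrep θ hθ
  have hw0 : w 0 = 0 := by
    rw [hrw 0 (Set.mem_Ici.2 le_rfl)]
    simp [occPos, occNeg, hzp0, hzm0]
  have e1 : occPos (fun u => - w u) = occNeg w := (occNeg_eq w).symm
  have e2 : occNeg (fun u => - w u) = occPos w := by
    rw [occNeg_eq]; simp
  intro θ hθ
  rw [hP θ hθ, hN θ hθ]
  apply le_antisymm
  · exact aux_le zp zm w hzm hwc hw0 hrw θ hθ
  · have := aux_le zm zp (fun u => - w u) hzp hwc.neg (by simp [hw0])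
      (by intro t ht; rw [e1, e2]; show -w t = _; rw [hrw t ht]; ring) θ hθ
    rwa [e1, e2] at this
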